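/- arXiv:2404.15518 — 2 statements merged into one kernel-verified Lean document; each statement's English description precedes it below -/
import Mathlib

section
/- Assume γL² < 1 and that there exists ω > 0 with Σ_s D(s)·⟨x(s), v⟩² ≥ ω·‖v‖₂² for every v ∈ ℝᵈ, and set the step size α := (1 − γL²)/(4L³). Then there exists a unique point w* ∈ W such that w* is the metric projection of w* + α·ḡ(w*) onto W (i.e., the projected expected TD update admits a unique fixed point in W). -/
/-!
By the obtuse-angle criterion, `w ∈ W` is the projection of `w + α ḡ(w)` onto `W` iff
`⟪ḡ(w), u - w⟫ ≤ 0` for all `u ∈ W`, a variational inequality in which the step size `α > 0` no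
longer appears. So the step size may be replaced by one so small that `w ↦ w + η ḡ(w)` contracts,
and Banach's theorem applies after composing with the nonexpansive projection.

Such an `η` exists because `-ḡ` is Lipschitz and strongly monotone. For two weight vectors with
difference `v`, the current-state term contributes at least `(1/L) ⟪x(s), v⟫²` to the monotonicity
of `-ḡ`, while the bootstrap term costs at most `γ L |⟪x(s'), v⟫| |⟪x(s), v⟫|`. After AM-GM,
stationarity makes the averages of `⟪x(s'), v⟫²` and `⟪x(s), v⟫²` equal, which leaves
`1/L - γ L > 0` times the feature covariance form.
-/

open scoped RealInnerProductSpace BigOperators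
open Finset

/-- The per-sample TD update
`g(w; s, s') := (f(r(s,s') + γ⟨x(s'), w⟩) − f(⟨x(s), w⟩)) • x(s)`. -/
noncomputable def tdSample {S : Type*} {d : ℕ} (x : S → EuclideanSpace ℝ (Fin d))
    (r : S → S → ℝ) (γ : ℝ) (f : ℝ → ℝ) (w : EuclideanSpace ℝ (Fin d)) (s s' : S) :
    EuclideanSpace ℝ (Fin d) :=
  (f (r s s' + γ * ⟪x s', w⟫) - f ⟪x s, w⟫) • x s

/-- The expected TD update `ḡ(w) := Σ_{s,s'} D(s) P(s,s') g(w; s, s')`. -/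
noncomputable def tdExpected {S : Type*} [Fintype S] {d : ℕ} (D : S → ℝ) (P : S → S → ℝ)
    (x : S → EuclideanSpace ℝ (Fin d)) (r : S → S → ℝ) (γ : ℝ) (f : ℝ → ℝ)
    (w : EuclideanSpace ℝ (Fin d)) : EuclideanSpace ℝ (Fin d) :=
  ∑ s, ∑ s', (D s * P s s') • tdSample x r γ f w s s'

open scoped NNReal

section MetricProjection

/-- `p` is a metric projection of `v` onto `W`: a point of `W` at minimal distance from `v`. It is
a relation because a general `W` may have no such point, or several. -/
def IsMetricProjection {E : Type*} [SeminormedAddCommGroup E] (W : Set E) (v p : E) : Prop :=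
  p ∈ W ∧ ∀ u ∈ W, ‖v - p‖ ≤ ‖v - u‖

lemma isMetricProjection_iff_norm_sub_eq_iInf {E : Type*} [SeminormedAddCommGroup E] {W : Set E}
    {v p : E} : IsMetricProjection W v p ↔ p ∈ W ∧ ‖v - p‖ = ⨅ w : W, ‖v - w‖ := by
  refine and_congr_right fun hp => ?_
  have : Nonempty W := ⟨⟨p, hp⟩⟩
  have hbdd : BddBelow (Set.range fun w : W => ‖v - w‖) :=
    ⟨0, Set.forall_mem_range.2 fun _ => norm_nonneg _⟩
  have hle : ⨅ w : W, ‖v - w‖ ≤ ‖v - p‖ := ciInf_le hbdd ⟨p, hp⟩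
  rw [← hle.ge_iff_eq', le_ciInf_iff hbdd, Subtype.forall]

variable {E : Type*} [NormedAddCommGroup E] [InnerProductSpace ℝ E] {W : Set E} {u v p q : E}

lemma isMetricProjection_iff_inner_le_zero (hW : Convex ℝ W) :
    IsMetricProjection W v p ↔ p ∈ W ∧ ∀ u ∈ W, ⟪v - p, u - p⟫ ≤ 0 :=
  isMetricProjection_iff_norm_sub_eq_iInf.trans
    (and_congr_right fun hp => norm_eq_iInf_iff_real_inner_le_zero hW hp)

lemma isMetricProjection_add_smul_iff (hW : Convex ℝ W) {α : ℝ} (hα : 0 < α) :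
    IsMetricProjection W (p + α • v) p ↔ p ∈ W ∧ ∀ u ∈ W, ⟪v, u - p⟫ ≤ 0 := by
  simp only [isMetricProjection_iff_inner_le_zero hW, add_sub_cancel_left, real_inner_smul_left,
    ← smul_eq_mul, smul_nonpos_iff_nonpos_of_pos_left hα]

lemma exists_isMetricProjection (hne : W.Nonempty) (hcpl : IsComplete W) (hcvx : Convex ℝ W)
    (v : E) : ∃ p, IsMetricProjection W v p :=
  let ⟨p, hp, h⟩ := exists_norm_eq_iInf_of_complete_convex hne hcpl hcvx v
  ⟨p, isMetricProjection_iff_norm_sub_eq_iInf.2 ⟨hp, h⟩⟩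

namespace IsMetricProjection

lemma dist_le (hW : Convex ℝ W) (hp : IsMetricProjection W u p) (hq : IsMetricProjection W v q) :
    dist p q ≤ dist u v := by
  have hpq := ((isMetricProjection_iff_inner_le_zero hW).1 hp).2 q hq.1
  have hqp := ((isMetricProjection_iff_inner_le_zero hW).1 hq).2 p hp.1
  have hsum : ⟪u - p, q - p⟫ + ⟪v - q, p - q⟫ = ‖p - q‖ ^ 2 - ⟪u - v, p - q⟫ := by
    rw [← real_inner_self_eq_norm_sq, ← neg_sub p q, inner_neg_right, neg_add_eq_sub,
      ← inner_sub_left, ← inner_sub_left]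
    congr 1
    abel
  have hsq : ‖p - q‖ ^ 2 ≤ ‖u - v‖ * ‖p - q‖ := by
    linarith [real_inner_le_norm (u - v) (p - q)]
  rw [dist_eq_norm, dist_eq_norm]
  rcases (norm_nonneg (p - q)).eq_or_lt with hzero | hpos
  · exact hzero.symm.trans_le (norm_nonneg _)
  · exact le_of_mul_le_mul_right ((sq _).symm.trans_le hsq) hpos

lemma unique (hW : Convex ℝ W) (hp : IsMetricProjection W v p) (hq : IsMetricProjection W v q) :
    p = q :=
  dist_le_zero.1 ((hp.dist_le hW hq).trans_eq (dist_self v))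

end IsMetricProjection

theorem existsUnique_isMetricProjection_of_contractingWith {k : ℝ≥0} {T : E → E}
    (hT : ContractingWith k T) (hne : W.Nonempty) (hcpl : IsComplete W) (hcvx : Convex ℝ W) :
    ∃! w, IsMetricProjection W (T w) w := by
  choose proj hproj using exists_isMetricProjection hne hcpl hcvx
  let projT : W → W := fun w => ⟨proj (T w), (hproj (T w)).1⟩
  have hprojT : ContractingWith k projT :=
    ⟨hT.1, .of_dist_le_mul fun u v =>
      ((hproj (T u)).dist_le hcvx (hproj (T v))).trans (hT.2.dist_le_mul u v)⟩
  have : Nonempty W := hne.to_subtype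
  have : CompleteSpace W := hcpl.completeSpace_coe
  obtain ⟨w, hw⟩ : ∃ w, projT w = w := ⟨_, hprojT.fixedPoint_isFixedPt⟩
  have hproj_eq : proj (T w) = w := congrArg Subtype.val hw
  refine ⟨w, by simpa only [hproj_eq] using hproj (T w), fun v hv => ?_⟩
  have hv_fix : projT ⟨v, hv.1⟩ = ⟨v, hv.1⟩ := Subtype.ext ((hproj (T v)).unique hcvx hv)
  exact congrArg Subtype.val (hprojT.fixedPoint_unique' hv_fix hw)

end MetricProjection

section StronglyMonotone

variable {E : Type*} [NormedAddCommGroup E] [InnerProductSpace ℝ E] {W : Set E} {F : E → E}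
  {μ : ℝ} {K : ℝ≥0}

/-- Strong monotonicity with modulus `μ` of an operator on a real inner product space. It is used
both for the scalar link function (`E = ℝ`) and for the negated expected TD update. -/
def StronglyMonotone (μ : ℝ) (F : E → E) : Prop :=
  ∀ u v, μ * ‖u - v‖ ^ 2 ≤ ⟪F u - F v, u - v⟫

lemma stronglyMonotone_of_monotone_of_mul_abs_sub_le {f : ℝ → ℝ} (hf : Monotone f)
    (h : ∀ a b, μ * |a - b| ≤ |f a - f b|) : StronglyMonotone μ f := by
  intro a b
  have hsign : 0 ≤ (f a - f b) * (a - b) := (hf.monovary monotone_id).sub_mul_sub_nonneg b a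
  calc μ * ‖a - b‖ ^ 2 = μ * |a - b| * |a - b| := by rw [Real.norm_eq_abs]; ring
    _ ≤ |f a - f b| * |a - b| := by gcongr; exact h a b
    _ = ⟪f a - f b, a - b⟫ := by
      rw [← abs_mul, abs_of_nonneg hsign, Real.inner_apply]

namespace StronglyMonotone

lemma norm_sub_smul_sub_sq_le (hF : StronglyMonotone μ F) (hK : LipschitzWith K F) {η : ℝ}
    (hη : 0 ≤ η) (u v : E) :
    ‖(u - η • F u) - (v - η • F v)‖ ^ 2 ≤ (1 - 2 * η * μ + η ^ 2 * K ^ 2) * ‖u - v‖ ^ 2 := by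
  calc ‖(u - η • F u) - (v - η • F v)‖ ^ 2 = ‖(u - v) - η • (F u - F v)‖ ^ 2 := by
        rw [smul_sub, sub_sub_sub_comm]
    _ = ‖u - v‖ ^ 2 - 2 * (η * ⟪F u - F v, u - v⟫) + η ^ 2 * ‖F u - F v‖ ^ 2 := by
        rw [norm_sub_sq_real, real_inner_smul_right, real_inner_comm, norm_smul, mul_pow,
          Real.norm_eq_abs, sq_abs]
    _ ≤ ‖u - v‖ ^ 2 - 2 * (η * (μ * ‖u - v‖ ^ 2)) + η ^ 2 * (K * ‖u - v‖) ^ 2 := by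
        gcongr
        · exact hF u v
        · exact hK.norm_sub_le u v
    _ = (1 - 2 * η * μ + η ^ 2 * K ^ 2) * ‖u - v‖ ^ 2 := by ring

lemma exists_contractingWith_sub_smul (hF : StronglyMonotone μ F) (hμ : 0 < μ)
    (hK : LipschitzWith K F) :
    ∃ η : ℝ, 0 < η ∧ ∃ k : ℝ≥0, ContractingWith k fun w => w - η • F w := by
  -- `1 - 2 η μ + η² K²` is smallest at `η = μ / K²`; the `+ 1` covers `K = 0`.
  set η : ℝ := μ / (K ^ 2 + 1)
  have hη0 : 0 < η := by positivity
  have hη_mul : η * (K ^ 2 + 1) = μ := div_mul_cancel₀ _ (by positivity)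
  have hfactor : 1 - 2 * η * μ + η ^ 2 * K ^ 2 < 1 :=
    calc 1 - 2 * η * μ + η ^ 2 * K ^ 2 = 1 - (η * μ + η ^ 2) := by linear_combination η * hη_mul
      _ < 1 := sub_lt_self 1 (by positivity)
  refine ⟨η, hη0, (√(1 - 2 * η * μ + η ^ 2 * K ^ 2)).toNNReal, ?_, ?_⟩
  · rwa [Real.toNNReal_lt_one, Real.sqrt_lt' one_pos, one_pow]
  · refine .of_dist_le' fun u v => ?_
    rw [dist_eq_norm, dist_eq_norm, ← Real.sqrt_sq (norm_nonneg (u - v)),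
      ← Real.sqrt_mul' _ (sq_nonneg _)]
    exact Real.le_sqrt_of_sq_le (hF.norm_sub_smul_sub_sq_le hK hη0.le u v)

theorem existsUnique_isMetricProjection_sub_smul (hF : StronglyMonotone μ F) (hμ : 0 < μ)
    (hK : LipschitzWith K F) (hne : W.Nonempty) (hcpl : IsComplete W) (hcvx : Convex ℝ W)
    {α : ℝ} (hα : 0 < α) : ∃! w, IsMetricProjection W (w - α • F w) w := by
  obtain ⟨η, hη, k, hk⟩ := hF.exists_contractingWith_sub_smul hμ hK
  have hstep (w : E) :
      IsMetricProjection W (w - α • F w) w ↔ IsMetricProjection W (w - η • F w) w := by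
    simp only [sub_eq_add_neg, ← smul_neg, isMetricProjection_add_smul_iff hcvx, hα, hη]
  simpa only [hstep] using existsUnique_isMetricProjection_of_contractingWith hk hne hcpl hcvx

end StronglyMonotone

end StronglyMonotone

section StationaryChain

variable {S R : Type*} [Fintype S] [CommSemiring R] {D : S → R} {P : S → S → R}

lemma sum_sum_mul_current_eq (hP1 : ∀ s, ∑ s', P s s' = 1) (φ : S → R) :
    ∑ s, ∑ s', D s * P s s' * φ s = ∑ s, D s * φ s := by
  simp only [← sum_mul, ← mul_sum, hP1, mul_one]

lemma sum_sum_mul_next_eq (hstat : ∀ s', ∑ s, D s * P s s' = D s') (φ : S → R) :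
    ∑ s, ∑ s', D s * P s s' * φ s' = ∑ s, D s * φ s := by
  rw [sum_comm]
  simp only [← sum_mul, hstat]

end StationaryChain

lemma exists_lipschitzWith_sum {ι X E : Type*} [PseudoEMetricSpace X] [SeminormedAddCommGroup E]
    {F : ι → X → E} (t : Finset ι) (hF : ∀ i ∈ t, ∃ C, LipschitzWith C (F i)) :
    ∃ C, LipschitzWith C (∑ i ∈ t, F i) :=
  sum_induction F (fun G => ∃ C, LipschitzWith C G)
    (fun _ _ ⟨_, hG⟩ ⟨_, hH⟩ => ⟨_, hG.add hH⟩) ⟨0, .const 0⟩ hF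

section ExpectedUpdate

variable {S : Type*} {d : ℕ} {D : S → ℝ} {P : S → S → ℝ} {x : S → EuclideanSpace ℝ (Fin d)}
  {r : S → S → ℝ} {γ μ ω : ℝ} {K : ℝ≥0} {f : ℝ → ℝ}

lemma inner_tdSample_sub_le (hf : StronglyMonotone μ f) (hK : LipschitzWith K f) (s s' : S)
    (w v : EuclideanSpace ℝ (Fin d)) :
    ⟪tdSample x r γ f w s s' - tdSample x r γ f v s s', w - v⟫ ≤
      |γ| * K / 2 * ⟪x s', w - v⟫ ^ 2 + (|γ| * K / 2 - μ) * ⟪x s, w - v⟫ ^ 2 := by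
  have hcurrent : μ * ⟪x s, w - v⟫ ^ 2 ≤ (f ⟪x s, w⟫ - f ⟪x s, v⟫) * ⟪x s, w - v⟫ := by
    simpa only [← inner_sub_right, Real.norm_eq_abs, sq_abs, Real.inner_apply] using
      hf ⟪x s, w⟫ ⟪x s, v⟫
  have hnext : |f (r s s' + γ * ⟪x s', w⟫) - f (r s s' + γ * ⟪x s', v⟫)| ≤
      K * (|γ| * |⟪x s', w - v⟫|) := by
    simpa only [Real.norm_eq_abs, add_sub_add_left_eq_sub, ← mul_sub, ← inner_sub_right, abs_mul]
      using hK.norm_sub_le (r s s' + γ * ⟪x s', w⟫) (r s s' + γ * ⟪x s', v⟫)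
  rw [tdSample, tdSample, ← sub_smul, real_inner_smul_left]
  generalize ⟪x s, w - v⟫ = a at *
  generalize ⟪x s', w - v⟫ = b at *
  generalize f (r s s' + γ * ⟪x s', w⟫) = A, f (r s s' + γ * ⟪x s', v⟫) = B at *
  have hcross : (A - B) * a ≤ |γ| * K / 2 * (b ^ 2 + a ^ 2) :=
    calc (A - B) * a ≤ |A - B| * |a| := (le_abs_self _).trans_eq (abs_mul _ _)
      _ ≤ K * (|γ| * |b|) * |a| := by gcongr
      _ = |γ| * K / 2 * (2 * |b| * |a|) := by ring
      _ ≤ |γ| * K / 2 * (|b| ^ 2 + |a| ^ 2) := by gcongr; exact two_mul_le_add_sq _ _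
      _ = |γ| * K / 2 * (b ^ 2 + a ^ 2) := by rw [sq_abs, sq_abs]
  linarith

lemma exists_lipschitzWith_tdSample (hK : LipschitzWith K f) (s s' : S) :
    ∃ C, LipschitzWith C fun w => tdSample x r γ f w s s' := by
  have hinner (y : EuclideanSpace ℝ (Fin d)) := (innerSL ℝ y).lipschitz
  have hnext := hK.comp ((LipschitzWith.const (r s s')).add
    ((lipschitzWith_smul γ).comp (hinner (x s'))))
  have hcurrent := hK.comp (hinner (x s))
  exact ⟨_, (ContinuousLinearMap.toSpanSingleton ℝ (x s)).lipschitz.comp (hnext.sub hcurrent)⟩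

variable [Fintype S]

lemma exists_lipschitzWith_tdExpected (hK : LipschitzWith K f) :
    ∃ C, LipschitzWith C (tdExpected D P x r γ f) := by
  have hterm (s s' : S) :
      ∃ C, LipschitzWith C fun w => (D s * P s s') • tdSample x r γ f w s s' :=
    let ⟨_, hC⟩ := exists_lipschitzWith_tdSample hK s s'
    ⟨_, (lipschitzWith_smul (D s * P s s')).comp hC⟩
  have hsum : tdExpected D P x r γ f =
      ∑ s, ∑ s', fun w => (D s * P s s') • tdSample x r γ f w s s' := by
    ext1 w
    simp only [tdExpected, Finset.sum_apply]
  rw [hsum]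
  exact exists_lipschitzWith_sum univ fun s _ =>
    exists_lipschitzWith_sum univ fun s' _ => hterm s s'

lemma inner_tdExpected_sub_le (hD : ∀ s, 0 ≤ D s) (hP : ∀ s s', 0 ≤ P s s')
    (hP1 : ∀ s, ∑ s', P s s' = 1) (hstat : ∀ s', ∑ s, D s * P s s' = D s')
    (hf : StronglyMonotone μ f) (hK : LipschitzWith K f) (w v : EuclideanSpace ℝ (Fin d)) :
    ⟪tdExpected D P x r γ f w - tdExpected D P x r γ f v, w - v⟫ ≤
      -(μ - |γ| * K) * ∑ s, D s * ⟪x s, w - v⟫ ^ 2 := by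
  simp only [tdExpected, ← sum_sub_distrib, ← smul_sub, sum_inner, real_inner_smul_left]
  calc _ ≤ ∑ s, ∑ s', D s * P s s' *
          (|γ| * K / 2 * ⟪x s', w - v⟫ ^ 2 + (|γ| * K / 2 - μ) * ⟪x s, w - v⟫ ^ 2) := by
        gcongr with s _ s' _
        · exact mul_nonneg (hD s) (hP s s')
        · exact inner_tdSample_sub_le hf hK s s' w v
    _ = |γ| * K / 2 * ∑ s, ∑ s', D s * P s s' * ⟪x s', w - v⟫ ^ 2 +
          (|γ| * K / 2 - μ) * ∑ s, ∑ s', D s * P s s' * ⟪x s, w - v⟫ ^ 2 := by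
        simp only [mul_add, sum_add_distrib, mul_sum, mul_left_comm]
    _ = -(μ - |γ| * K) * ∑ s, D s * ⟪x s, w - v⟫ ^ 2 := by
        rw [sum_sum_mul_next_eq hstat fun s => ⟪x s, w - v⟫ ^ 2,
          sum_sum_mul_current_eq hP1 fun s => ⟪x s, w - v⟫ ^ 2]
        ring

lemma stronglyMonotone_neg_tdExpected (hD : ∀ s, 0 ≤ D s) (hP : ∀ s s', 0 ≤ P s s')
    (hP1 : ∀ s, ∑ s', P s s' = 1) (hstat : ∀ s', ∑ s, D s * P s s' = D s')
    (hf : StronglyMonotone μ f) (hK : LipschitzWith K f) (hγ : |γ| * K ≤ μ)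
    (hcov : ∀ v, ω * ‖v‖ ^ 2 ≤ ∑ s, D s * ⟪x s, v⟫ ^ 2) :
    StronglyMonotone ((μ - |γ| * K) * ω) (-tdExpected D P x r γ f) := by
  intro w v
  have hinner := inner_tdExpected_sub_le (x := x) (r := r) (γ := γ) hD hP hP1 hstat hf hK w v
  rw [Pi.neg_apply, Pi.neg_apply, ← neg_sub', inner_neg_left]
  calc (μ - |γ| * K) * ω * ‖w - v‖ ^ 2 ≤ (μ - |γ| * K) * ∑ s, D s * ⟪x s, w - v⟫ ^ 2 := by
        rw [mul_assoc]
        exact mul_le_mul_of_nonneg_left (hcov (w - v)) (sub_nonneg.2 hγ)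
    _ ≤ _ := by linarith

theorem td_projected_update_unique_fixed_point_general (hD : ∀ s, 0 ≤ D s)
    (hP : ∀ s s', 0 ≤ P s s') (hP1 : ∀ s, ∑ s', P s s' = 1)
    (hstat : ∀ s', ∑ s, D s * P s s' = D s') (hf : StronglyMonotone μ f)
    (hK : LipschitzWith K f) (hγ : |γ| * K < μ) {W : Set (EuclideanSpace ℝ (Fin d))}
    (hne : W.Nonempty) (hcl : IsClosed W) (hcvx : Convex ℝ W) (hω : 0 < ω)
    (hcov : ∀ v, ω * ‖v‖ ^ 2 ≤ ∑ s, D s * ⟪x s, v⟫ ^ 2) {α : ℝ} (hα : 0 < α) :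
    ∃! w, IsMetricProjection W (w + α • tdExpected D P x r γ f w) w := by
  have hmono := stronglyMonotone_neg_tdExpected (r := r) hD hP hP1 hstat hf hK hγ.le hcov
  obtain ⟨C, hC⟩ := exists_lipschitzWith_tdExpected (D := D) (P := P) (x := x) (r := r) (γ := γ) hK
  simpa only [Pi.neg_apply, smul_neg, sub_neg_eq_add] using
    hmono.existsUnique_isMetricProjection_sub_smul (mul_pos (sub_pos.2 hγ) hω) hC.neg hne
      hcl.isComplete hcvx hα

end ExpectedUpdate

/-- with `γL² < 1`, feature covariance lower bound `ω > 0` and step size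
`α = (1 − γL²)/(4L³)`, the projected expected TD update admits a unique fixed point
in the nonempty compact convex set `W`. -/
theorem td_projected_update_unique_fixed_point {S : Type*} [Fintype S] [Nonempty S] {d : ℕ}
    (D : S → ℝ) (P : S → S → ℝ) (x : S → EuclideanSpace ℝ (Fin d))
    (r : S → S → ℝ) (γ L : ℝ) (f : ℝ → ℝ)
    (hD : ∀ s, 0 ≤ D s) (hD1 : ∑ s, D s = 1)
    (hP : ∀ s s', 0 ≤ P s s') (hP1 : ∀ s, ∑ s', P s s' = 1)
    (hstat : ∀ s', ∑ s, D s * P s s' = D s')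
    (hx : ∀ s, ‖x s‖ ≤ 1)
    (hγ0 : 0 ≤ γ) (hγ1 : γ < 1) (hL : 1 ≤ L)
    (hf : StrictMono f)
    (hfLip : ∀ a b : ℝ, (1 / L) * |a - b| ≤ |f a - f b| ∧ |f a - f b| ≤ L * |a - b|)
    (W : Set (EuclideanSpace ℝ (Fin d)))
    (hWne : W.Nonempty) (hWcpt : IsCompact W) (hWcvx : Convex ℝ W)
    (hγL : γ * L ^ 2 < 1)
    (ω : ℝ) (hω : 0 < ω)
    (hcov : ∀ v : EuclideanSpace ℝ (Fin d), ω * ‖v‖ ^ 2 ≤ ∑ s, D s * ⟪x s, v⟫ ^ 2) :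
    ∃! wstar : EuclideanSpace ℝ (Fin d), wstar ∈ W ∧
      ∀ u ∈ W,
        ‖wstar + ((1 - γ * L ^ 2) / (4 * L ^ 3)) • tdExpected D P x r γ f wstar - wstar‖ ≤
          ‖wstar + ((1 - γ * L ^ 2) / (4 * L ^ 3)) • tdExpected D P x r γ f wstar - u‖ := by
  have hL0 : 0 < L := one_pos.trans_le hL
  have hγK : |γ| * L.toNNReal < 1 / L := by
    rw [abs_of_nonneg hγ0, Real.coe_toNNReal L hL0.le, lt_div_iff₀ hL0]
    linarith
  exact td_projected_update_unique_fixed_point_general hD hP hP1 hstat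
    (stronglyMonotone_of_monotone_of_mul_abs_sub_le hf.monotone fun a b => (hfLip a b).1)
    (.of_dist_le' fun a b => (hfLip a b).2) hγK hWne hWcpt.isClosed hWcvx hω hcov
    (div_pos (sub_pos.2 hγL) (by positivity))
end

section
/- Assume γL² < 1 and set α := (1 − γL²)/(4L³). Let (w_t)_{t≥0} be a sequence in W such that for every t, w_{t+1} is the metric projection of w_t + α·ḡ(w_t) onto W, and let w* ∈ W be a fixed point of this projected update (w* is the metric projection of w* + α·ḡ(w*) onto W). Then for every T ≥ 1, writing w̄_T := (1/T)·Σ_{t=0}^{T−1} w_t, we have Σ_s D(s)·⟨x(s), w* − w̄_T⟩² ≤ (2L²/(1 − γL²))²·‖w* − w_0‖₂²/T. -/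
open scoped RealInnerProductSpace BigOperators
open Finset

/-!
Write `‖u‖_D² = ∑ s, D s * ⟪x s, u⟫²` for the squared size of the value function of `u`. As `D` is
stationary, the current and the next state are both distributed as `D`, so the bootstrapped part of
the TD error, which is `Lγ`-Lipschitz in the next value, can cost at most `Lγ ‖w⋆ - w‖_D²`, against
the `L⁻¹ ‖w⋆ - w‖_D²` gained from the strong monotonicity of `f`. Hence `ḡ` satisfies
`(L⁻¹ - Lγ) ‖w⋆ - w‖_D² ≤ ⟪ḡ w - ḡ w⋆, w⋆ - w⟫` and
`‖ḡ w - ḡ w⋆‖² ≤ ((1 + γ) L)² ‖w⋆ - w‖_D² ≤ 4L² ‖w⋆ - w‖_D²`. Metric projections are nonexpansive,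
so a step of size `α` decreases `‖w⋆ - w‖²` by at least `(2α(L⁻¹ - Lγ) - 4α²L²) ‖w⋆ - w‖_D²`; the
step size in the theorem maximises this factor. Summing over `t < T` telescopes, and convexity of
`‖·‖_D²` passes to the averaged iterate.
-/

section MetricProjection

variable {E : Type*} [NormedAddCommGroup E]

/-- `p` is a metric projection of `v` onto `K`, that is, a point of `K` nearest to `v`. Stated as a
relation, so that neither existence nor uniqueness of a nearest point is presupposed. -/
def IsMetricProj (K : Set E) (v p : E) : Prop :=
  p ∈ K ∧ ∀ u ∈ K, ‖v - p‖ ≤ ‖v - u‖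

namespace IsMetricProj

variable [InnerProductSpace ℝ E] {K : Set E} {v v' p p' : E}

lemma inner_sub_nonpos (h : IsMetricProj K v p) (hK : Convex ℝ K) {u : E} (hu : u ∈ K) :
    ⟪v - p, u - p⟫ ≤ 0 := by
  have : Nonempty K := ⟨⟨p, h.1⟩⟩
  have hbdd : BddBelow (Set.range fun u : K => ‖v - u‖) :=
    ⟨0, Set.forall_mem_range.2 fun _ => norm_nonneg _⟩
  have hmin : ‖v - p‖ = ⨅ u : K, ‖v - u‖ :=
    le_antisymm (le_ciInf fun u => h.2 u u.2) (ciInf_le hbdd ⟨p, h.1⟩)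
  exact (norm_eq_iInf_iff_real_inner_le_zero hK h.1).1 hmin u hu

lemma norm_sub_le (h : IsMetricProj K v p) (h' : IsMetricProj K v' p') (hK : Convex ℝ K) :
    ‖p - p'‖ ≤ ‖v - v'‖ := by
  have hsq : ‖p - p'‖ * ‖p - p'‖ ≤ ‖v - v'‖ * ‖p - p'‖ :=
    calc ‖p - p'‖ * ‖p - p'‖
        = ⟪v - v', p - p'⟫ + ⟪v - p, p' - p⟫ + ⟪v' - p', p - p'⟫ := by
          rw [← real_inner_self_eq_norm_mul_norm]
          simp only [inner_sub_left, inner_sub_right]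
          ring
      _ ≤ ⟪v - v', p - p'⟫ := by
          linarith [h.inner_sub_nonpos hK h'.1, h'.inner_sub_nonpos hK h.1]
      _ ≤ ‖v - v'‖ * ‖p - p'‖ := real_inner_le_norm _ _
  rcases (norm_nonneg (p - p')).eq_or_lt with hzero | hpos
  · exact hzero ▸ norm_nonneg _
  · exact le_of_mul_le_mul_right hsq hpos

lemma mul_le_norm_sq_sub_norm_sq {α m B V : ℝ} {g g' : E} (hK : Convex ℝ K) (hα : 0 ≤ α)
    (h : IsMetricProj K (v + α • g) p) (h' : IsMetricProj K (v' + α • g') p')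
    (hcoercive : m * V ≤ ⟪g - g', v' - v⟫) (hbound : ‖g - g'‖ ^ 2 ≤ B * V) :
    (2 * α * m - α ^ 2 * B) * V ≤ ‖v' - v‖ ^ 2 - ‖p' - p‖ ^ 2 := by
  have hsplit : v' + α • g' - (v + α • g) = (v' - v) - α • (g - g') := by
    rw [smul_sub]; abel
  have hproj : ‖p' - p‖ ^ 2 ≤ ‖v' - v‖ ^ 2 - 2 * α * ⟪g - g', v' - v⟫ + α ^ 2 * ‖g - g'‖ ^ 2 :=
    calc ‖p' - p‖ ^ 2
        ≤ ‖(v' - v) - α • (g - g')‖ ^ 2 :=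
          pow_le_pow_left₀ (norm_nonneg _) (hsplit ▸ h'.norm_sub_le h hK) 2
      _ = ‖v' - v‖ ^ 2 - 2 * α * ⟪g - g', v' - v⟫ + α ^ 2 * ‖g - g'‖ ^ 2 := by
          rw [norm_sub_sq_real, real_inner_smul_right, real_inner_comm, norm_smul, mul_pow,
            Real.norm_eq_abs, sq_abs, mul_assoc]
  linarith [mul_le_mul_of_nonneg_left hcoercive hα, mul_le_mul_of_nonneg_left hbound (sq_nonneg α)]

end IsMetricProj

end MetricProjection

section Convexity

lemma norm_sq_sum_smul_le {ι E : Type*} [SeminormedAddCommGroup E] [NormedSpace ℝ E]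
    {t : Finset ι} {p : ι → ℝ} (hp : ∀ i ∈ t, 0 ≤ p i) (hp1 : ∑ i ∈ t, p i = 1) (v : ι → E) :
    ‖∑ i ∈ t, p i • v i‖ ^ 2 ≤ ∑ i ∈ t, p i * ‖v i‖ ^ 2 :=
  (convexOn_univ_norm.pow (fun _ _ => norm_nonneg _) 2).map_sum_le hp hp1
    fun i _ => Set.mem_univ (v i)

variable {E : Type*} [AddCommGroup E] [Module ℝ E] {φ : E → ℝ}

lemma map_sub_average_le_of_convexOn (hφ : ConvexOn ℝ Set.univ φ) (a : E) (w : ℕ → E)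
    {T : ℕ} (hT : 1 ≤ T) :
    φ (a - (T : ℝ)⁻¹ • ∑ t ∈ range T, w t) ≤ (T : ℝ)⁻¹ * ∑ t ∈ range T, φ (a - w t) := by
  have hweights : ∑ _t ∈ range T, (T : ℝ)⁻¹ = 1 := by
    simp [show (T : ℝ) ≠ 0 by exact_mod_cast (by omega : T ≠ 0)]
  have haverage : a - (T : ℝ)⁻¹ • ∑ t ∈ range T, w t =
      ∑ t ∈ range T, (T : ℝ)⁻¹ • (a - w t) := by
    simp only [smul_sub, sum_sub_distrib, ← sum_smul, hweights, one_smul, smul_sum]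
  rw [haverage, mul_sum]
  exact hφ.map_sum_le (fun _ _ => by positivity) hweights fun _ _ => Set.mem_univ _

lemma mul_map_sub_average_le_div (hφ : ConvexOn ℝ Set.univ φ) {κ : ℝ} (hκ : 0 ≤ κ) {a : E}
    {w : ℕ → E} {ψ : ℕ → ℝ} (hψ : ∀ t, 0 ≤ ψ t)
    (hdescent : ∀ t, κ * φ (a - w t) ≤ ψ t - ψ (t + 1)) {T : ℕ} (hT : 1 ≤ T) :
    κ * φ (a - (T : ℝ)⁻¹ • ∑ t ∈ range T, w t) ≤ ψ 0 / T :=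
  calc κ * φ (a - (T : ℝ)⁻¹ • ∑ t ∈ range T, w t)
      ≤ κ * ((T : ℝ)⁻¹ * ∑ t ∈ range T, φ (a - w t)) :=
        mul_le_mul_of_nonneg_left (map_sub_average_le_of_convexOn hφ a w hT) hκ
    _ = (∑ t ∈ range T, κ * φ (a - w t)) / T := by rw [← mul_sum]; ring
    _ ≤ (∑ t ∈ range T, (ψ t - ψ (t + 1))) / T := by gcongr with t; exact hdescent t
    _ = (ψ 0 - ψ T) / T := by rw [sum_range_sub']
    _ ≤ ψ 0 / T := by gcongr; exact sub_le_self _ (hψ T)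

end Convexity

section ValueSqNorm

variable {S E : Type*} [Fintype S] [NormedAddCommGroup E] [InnerProductSpace ℝ E]

/-- The squared `D`-weighted `ℓ²` norm `‖u‖_D²` of the linear value function `s ↦ ⟪x s, u⟫`,
in which the averaged iterate is estimated and `tdExpected` is coercive. -/
def valueSqNorm (D : S → ℝ) (x : S → E) (u : E) : ℝ :=
  ∑ s, D s * ⟪x s, u⟫ ^ 2

variable {D : S → ℝ}

lemma valueSqNorm_nonneg (hD : ∀ s, 0 ≤ D s) (x : S → E) (u : E) : 0 ≤ valueSqNorm D x u :=
  sum_nonneg fun s _ => mul_nonneg (hD s) (sq_nonneg _)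

lemma convexOn_valueSqNorm (hD : ∀ s, 0 ≤ D s) (x : S → E) :
    ConvexOn ℝ Set.univ (valueSqNorm D x) := by
  have hterm (s : S) : ConvexOn ℝ Set.univ fun u : E => D s * ⟪x s, u⟫ ^ 2 :=
    (even_two.convexOn_pow (𝕜 := ℝ).comp_linearMap (innerₛₗ ℝ (x s))).smul (hD s)
  have hsum : ConvexOn ℝ Set.univ (∑ s, fun u : E => D s * ⟪x s, u⟫ ^ 2) :=
    sum_induction _ (ConvexOn ℝ Set.univ) (fun _ _ => ConvexOn.add)
      (convexOn_const 0 convex_univ) fun s _ => hterm s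
  convert hsum using 1
  ext u
  simp only [valueSqNorm, Finset.sum_apply]

end ValueSqNorm

section TDError

/-- The temporal-difference error, measured through `f`, of a transition with reward `c` between
states of values `z` and `z'`: the scalar factor of `tdSample`. -/
def tdError (f : ℝ → ℝ) (γ c z z' : ℝ) : ℝ :=
  f (c + γ * z') - f z

variable {f : ℝ → ℝ} {γ L m : ℝ}

lemma mul_sq_sub_le_of_monotone (hf : Monotone f) (hlow : ∀ a b, m * |a - b| ≤ |f a - f b|)
    (a b : ℝ) : m * (a - b) ^ 2 ≤ (f a - f b) * (a - b) := by
  have hsign : 0 ≤ (f a - f b) * (a - b) := by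
    rcases le_total a b with h | h
    · exact mul_nonneg_of_nonpos_of_nonpos (sub_nonpos.2 (hf h)) (sub_nonpos.2 h)
    · exact mul_nonneg (sub_nonneg.2 (hf h)) (sub_nonneg.2 h)
  calc m * (a - b) ^ 2 = m * |a - b| * |a - b| := by rw [← sq_abs]; ring
    _ ≤ |f a - f b| * |a - b| := mul_le_mul_of_nonneg_right (hlow a b) (abs_nonneg _)
    _ = (f a - f b) * (a - b) := by rw [← abs_mul, abs_of_nonneg hsign]

lemma abs_sub_bootstrap_le (hγ : 0 ≤ γ) (hup : ∀ a b, |f a - f b| ≤ L * |a - b|) (c a b : ℝ) :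
    |f (c + γ * a) - f (c + γ * b)| ≤ L * γ * |a - b| :=
  (hup _ _).trans_eq <| by
    rw [add_sub_add_left_eq_sub, ← mul_sub, abs_mul, abs_of_nonneg hγ, mul_assoc]

lemma le_tdError_sub_mul (hf : Monotone f) (hγ : 0 ≤ γ)
    (hlow : ∀ a b, m * |a - b| ≤ |f a - f b|) (hup : ∀ a b, |f a - f b| ≤ L * |a - b|)
    (c a a' b b' : ℝ) :
    (m - L * γ / 2) * (b - a) ^ 2 + -(L * γ / 2) * (b' - a') ^ 2 ≤
      (tdError f γ c a a' - tdError f γ c b b') * (b - a) := by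
  have hL : 0 ≤ L := by simpa using (abs_nonneg _).trans (hup 1 0)
  have hmono := mul_sq_sub_le_of_monotone hf hlow b a
  have hbootstrap : (f (c + γ * b') - f (c + γ * a')) * (b - a) ≤
      L * γ / 2 * ((b' - a') ^ 2 + (b - a) ^ 2) :=
    calc (f (c + γ * b') - f (c + γ * a')) * (b - a)
        ≤ |f (c + γ * b') - f (c + γ * a')| * |b - a| := by
          rw [← abs_mul]; exact le_abs_self _
      _ ≤ L * γ * |b' - a'| * |b - a| :=
          mul_le_mul_of_nonneg_right (abs_sub_bootstrap_le hγ hup c b' a') (abs_nonneg _)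
      _ = L * γ / 2 * (2 * |b' - a'| * |b - a|) := by ring
      _ ≤ L * γ / 2 * (|b' - a'| ^ 2 + |b - a| ^ 2) :=
          mul_le_mul_of_nonneg_left (two_mul_le_add_sq _ _) (by positivity)
      _ = L * γ / 2 * ((b' - a') ^ 2 + (b - a) ^ 2) := by rw [sq_abs, sq_abs]
  rw [tdError, tdError]
  linarith

lemma tdError_sub_sq_le (hγ : 0 ≤ γ) (hup : ∀ a b, |f a - f b| ≤ L * |a - b|)
    (c a a' b b' : ℝ) :
    (tdError f γ c a a' - tdError f γ c b b') ^ 2 ≤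
      L ^ 2 * (1 + γ) * (b - a) ^ 2 + L ^ 2 * (1 + γ) * γ * (b' - a') ^ 2 := by
  have habs : |tdError f γ c a a' - tdError f γ c b b'| ≤ L * (|b - a| + γ * |b' - a'|) :=
    calc |tdError f γ c a a' - tdError f γ c b b'|
        = |(f b - f a) - (f (c + γ * b') - f (c + γ * a'))| := by
          rw [tdError, tdError]; congr 1; ring
      _ ≤ |f b - f a| + |f (c + γ * b') - f (c + γ * a')| := abs_sub _ _
      _ ≤ L * |b - a| + L * γ * |b' - a'| :=
          add_le_add (hup b a) (abs_sub_bootstrap_le hγ hup c b' a')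
      _ = L * (|b - a| + γ * |b' - a'|) := by ring
  calc (tdError f γ c a a' - tdError f γ c b b') ^ 2
      ≤ L ^ 2 * (|b - a| + γ * |b' - a'|) ^ 2 := by
        rw [← sq_abs, ← mul_pow]; exact pow_le_pow_left₀ (abs_nonneg _) habs 2
    _ ≤ L ^ 2 * ((1 + γ) * (|b - a| ^ 2 + γ * |b' - a'| ^ 2)) := by
        gcongr
        linarith [mul_nonneg hγ (sq_nonneg (|b - a| - |b' - a'|))]
    _ = L ^ 2 * (1 + γ) * (b - a) ^ 2 + L ^ 2 * (1 + γ) * γ * (b' - a') ^ 2 := by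
        rw [sq_abs, sq_abs]; ring

end TDError

lemma sum_sum_mul_add_of_stationary {S R : Type*} [Fintype S] [CommSemiring R] {D : S → R}
    {P : S → S → R} (hP1 : ∀ s, ∑ s', P s s' = 1) (hstat : ∀ s', ∑ s, D s * P s s' = D s')
    (a b : R) (φ : S → R) :
    ∑ s, ∑ s', D s * P s s' * (a * φ s + b * φ s') = (a + b) * ∑ s, D s * φ s := by
  have hcurrent : ∑ s, ∑ s', D s * P s s' * (a * φ s) = a * ∑ s, D s * φ s := by
    simp only [← sum_mul, ← mul_sum, hP1, mul_one]
    rw [mul_sum]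
    exact sum_congr rfl fun s _ => mul_left_comm _ _ _
  have hnext : ∑ s, ∑ s', D s * P s s' * (b * φ s') = b * ∑ s, D s * φ s := by
    rw [sum_comm, mul_sum]
    simp only [← sum_mul, hstat]
    exact sum_congr rfl fun s _ => mul_left_comm _ _ _
  simp only [mul_add, sum_add_distrib]
  rw [hcurrent, hnext, add_mul]

section TDExpected

variable {S : Type*} [Fintype S] {d : ℕ} {D : S → ℝ} {P : S → S → ℝ}
  {x : S → EuclideanSpace ℝ (Fin d)} {r : S → S → ℝ} {γ L m : ℝ} {f : ℝ → ℝ}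

lemma tdExpected_sub_tdExpected (v w : EuclideanSpace ℝ (Fin d)) :
    tdExpected D P x r γ f v - tdExpected D P x r γ f w =
      ∑ s, ∑ s', (D s * P s s') • ((tdError f γ (r s s') ⟪x s, v⟫ ⟪x s', v⟫ -
        tdError f γ (r s s') ⟪x s, w⟫ ⟪x s', w⟫) • x s) := by
  simp only [tdExpected, tdSample, tdError, ← sum_sub_distrib, ← smul_sub, ← sub_smul]

lemma mul_valueSqNorm_le_inner_tdExpected_sub (hD : ∀ s, 0 ≤ D s) (hP : ∀ s s', 0 ≤ P s s')
    (hP1 : ∀ s, ∑ s', P s s' = 1) (hstat : ∀ s', ∑ s, D s * P s s' = D s')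
    (hγ : 0 ≤ γ) (hf : Monotone f) (hlow : ∀ a b, m * |a - b| ≤ |f a - f b|)
    (hup : ∀ a b, |f a - f b| ≤ L * |a - b|) (v w : EuclideanSpace ℝ (Fin d)) :
    (m - L * γ) * valueSqNorm D x (w - v) ≤
      ⟪tdExpected D P x r γ f v - tdExpected D P x r γ f w, w - v⟫ := by
  calc (m - L * γ) * valueSqNorm D x (w - v)
      = ∑ s, ∑ s', D s * P s s' * ((m - L * γ / 2) * ⟪x s, w - v⟫ ^ 2 +
          -(L * γ / 2) * ⟪x s', w - v⟫ ^ 2) := by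
        rw [sum_sum_mul_add_of_stationary hP1 hstat _ _ fun s => ⟪x s, w - v⟫ ^ 2, valueSqNorm]
        ring
    _ ≤ ∑ s, ∑ s', D s * P s s' * ((tdError f γ (r s s') ⟪x s, v⟫ ⟪x s', v⟫ -
          tdError f γ (r s s') ⟪x s, w⟫ ⟪x s', w⟫) * ⟪x s, w - v⟫) := by
        gcongr with s _ s' _
        · exact mul_nonneg (hD s) (hP s s')
        · simp only [inner_sub_right]
          exact le_tdError_sub_mul hf hγ hlow hup _ _ _ _ _
    _ = ⟪tdExpected D P x r γ f v - tdExpected D P x r γ f w, w - v⟫ := by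
        simp only [tdExpected_sub_tdExpected, sum_inner, real_inner_smul_left]

lemma norm_tdExpected_sub_sq_le (hD : ∀ s, 0 ≤ D s) (hD1 : ∑ s, D s = 1)
    (hP : ∀ s s', 0 ≤ P s s') (hP1 : ∀ s, ∑ s', P s s' = 1)
    (hstat : ∀ s', ∑ s, D s * P s s' = D s') (hx : ∀ s, ‖x s‖ ≤ 1) (hγ : 0 ≤ γ)
    (hup : ∀ a b, |f a - f b| ≤ L * |a - b|) (v w : EuclideanSpace ℝ (Fin d)) :
    ‖tdExpected D P x r γ f v - tdExpected D P x r γ f w‖ ^ 2 ≤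
      ((1 + γ) * L) ^ 2 * valueSqNorm D x (w - v) := by
  set δ : S → S → ℝ := fun s s' => tdError f γ (r s s') ⟪x s, v⟫ ⟪x s', v⟫ -
    tdError f γ (r s s') ⟪x s, w⟫ ⟪x s', w⟫
  have hjoint : ∑ q : S × S, D q.1 * P q.1 q.2 = 1 := by
    simp only [Fintype.sum_prod_type, ← mul_sum, hP1, mul_one, hD1]
  have hjoint_nonneg (q : S × S) : 0 ≤ D q.1 * P q.1 q.2 := mul_nonneg (hD _) (hP _ _)
  have hterm (s s' : S) : ‖δ s s' • x s‖ ^ 2 ≤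
      L ^ 2 * (1 + γ) * ⟪x s, w - v⟫ ^ 2 + L ^ 2 * (1 + γ) * γ * ⟪x s', w - v⟫ ^ 2 :=
    calc ‖δ s s' • x s‖ ^ 2 = δ s s' ^ 2 * ‖x s‖ ^ 2 := by
          rw [norm_smul, mul_pow, Real.norm_eq_abs, sq_abs]
      _ ≤ δ s s' ^ 2 :=
          mul_le_of_le_one_right (sq_nonneg _) (pow_le_one₀ (norm_nonneg _) (hx s))
      _ ≤ _ := by
          simp only [inner_sub_right]
          exact tdError_sub_sq_le hγ hup _ _ _ _ _
  calc ‖tdExpected D P x r γ f v - tdExpected D P x r γ f w‖ ^ 2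
      = ‖∑ q : S × S, (D q.1 * P q.1 q.2) • (δ q.1 q.2 • x q.1)‖ ^ 2 := by
        rw [tdExpected_sub_tdExpected, Fintype.sum_prod_type]
    _ ≤ ∑ s, ∑ s', D s * P s s' * ‖δ s s' • x s‖ ^ 2 :=
        (norm_sq_sum_smul_le (fun q _ => hjoint_nonneg q) hjoint _).trans_eq
          (Fintype.sum_prod_type _)
    _ ≤ ∑ s, ∑ s', D s * P s s' * (L ^ 2 * (1 + γ) * ⟪x s, w - v⟫ ^ 2 +
          L ^ 2 * (1 + γ) * γ * ⟪x s', w - v⟫ ^ 2) := by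
        gcongr with s _ s' _
        · exact hjoint_nonneg (s, s')
        · exact hterm s s'
    _ = ((1 + γ) * L) ^ 2 * valueSqNorm D x (w - v) := by
        rw [sum_sum_mul_add_of_stationary hP1 hstat _ _ fun s => ⟪x s, w - v⟫ ^ 2, valueSqNorm]
        ring

end TDExpected

theorem td_expected_update_average_rate_general {S : Type*} [Fintype S] {d : ℕ}
    {D : S → ℝ} {P : S → S → ℝ} {x : S → EuclideanSpace ℝ (Fin d)} {r : S → S → ℝ} {γ L : ℝ}
    {f : ℝ → ℝ} (hD : ∀ s, 0 ≤ D s) (hD1 : ∑ s, D s = 1)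
    (hP : ∀ s s', 0 ≤ P s s') (hP1 : ∀ s, ∑ s', P s s' = 1)
    (hstat : ∀ s', ∑ s, D s * P s s' = D s') (hx : ∀ s, ‖x s‖ ≤ 1)
    (hγ0 : 0 ≤ γ) (hL : 1 ≤ L) (hf : Monotone f)
    (hfLip : ∀ a b : ℝ, (1 / L) * |a - b| ≤ |f a - f b| ∧ |f a - f b| ≤ L * |a - b|)
    {W : Set (EuclideanSpace ℝ (Fin d))} (hW : Convex ℝ W) (hγL : γ * L ^ 2 < 1)
    {w : ℕ → EuclideanSpace ℝ (Fin d)}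
    (hupd : ∀ t, IsMetricProj W
      (w t + ((1 - γ * L ^ 2) / (4 * L ^ 3)) • tdExpected D P x r γ f (w t)) (w (t + 1)))
    {wstar : EuclideanSpace ℝ (Fin d)}
    (hfix : IsMetricProj W
      (wstar + ((1 - γ * L ^ 2) / (4 * L ^ 3)) • tdExpected D P x r γ f wstar) wstar)
    {T : ℕ} (hT : 1 ≤ T) :
    valueSqNorm D x (wstar - (T : ℝ)⁻¹ • ∑ t ∈ range T, w t) ≤
      (2 * L ^ 2 / (1 - γ * L ^ 2)) ^ 2 * ‖wstar - w 0‖ ^ 2 / T := by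
  have : 0 < L := by linarith
  have hgap : 0 < 1 - γ * L ^ 2 := sub_pos.2 hγL
  have hγ1 : γ ≤ 1 := (le_mul_of_one_le_right hγ0 (one_le_pow₀ hL)).trans hγL.le
  have hbound (t : ℕ) : ‖tdExpected D P x r γ f (w t) - tdExpected D P x r γ f wstar‖ ^ 2 ≤
      (2 * L) ^ 2 * valueSqNorm D x (wstar - w t) :=
    (norm_tdExpected_sub_sq_le hD hD1 hP hP1 hstat hx hγ0 (fun a b => (hfLip a b).2) _ _).trans <|
      mul_le_mul_of_nonneg_right (by gcongr; linarith) (valueSqNorm_nonneg hD x _)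
  have hdescent (t : ℕ) : ((1 - γ * L ^ 2) / (2 * L ^ 2)) ^ 2 * valueSqNorm D x (wstar - w t) ≤
      ‖wstar - w t‖ ^ 2 - ‖wstar - w (t + 1)‖ ^ 2 := by
    convert IsMetricProj.mul_le_norm_sq_sub_norm_sq hW (by positivity) (hupd t) hfix
      (mul_valueSqNorm_le_inner_tdExpected_sub hD hP hP1 hstat hγ0 hf
        (fun a b => (hfLip a b).1) (fun a b => (hfLip a b).2) (w t) wstar) (hbound t) using 2
    field_simp
    ring
  have haverage := mul_map_sub_average_le_div (convexOn_valueSqNorm hD x) (sq_nonneg _)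
    (fun t => sq_nonneg ‖wstar - w t‖) hdescent hT
  rw [mul_div_assoc, ← inv_div (1 - γ * L ^ 2), inv_pow]
  exact (le_inv_mul_iff₀ (by positivity)).2 haverage

/-- averaged-iterate convergence of the projected expected TD update:
for the averaged iterate `w̄_T = (1/T) Σ_{t<T} w_t`,
`Σ_s D(s)⟨x(s), w* − w̄_T⟩² ≤ (2L²/(1 − γL²))² ‖w* − w₀‖²/T`. -/
theorem td_expected_update_average_rate {S : Type*} [Fintype S] [Nonempty S] {d : ℕ}
    (D : S → ℝ) (P : S → S → ℝ) (x : S → EuclideanSpace ℝ (Fin d))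
    (r : S → S → ℝ) (γ L : ℝ) (f : ℝ → ℝ)
    (hD : ∀ s, 0 ≤ D s) (hD1 : ∑ s, D s = 1)
    (hP : ∀ s s', 0 ≤ P s s') (hP1 : ∀ s, ∑ s', P s s' = 1)
    (hstat : ∀ s', ∑ s, D s * P s s' = D s')
    (hx : ∀ s, ‖x s‖ ≤ 1)
    (hγ0 : 0 ≤ γ) (hγ1 : γ < 1) (hL : 1 ≤ L)
    (hf : StrictMono f)
    (hfLip : ∀ a b : ℝ, (1 / L) * |a - b| ≤ |f a - f b| ∧ |f a - f b| ≤ L * |a - b|)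
    (W : Set (EuclideanSpace ℝ (Fin d)))
    (hWne : W.Nonempty) (hWcpt : IsCompact W) (hWcvx : Convex ℝ W)
    (hγL : γ * L ^ 2 < 1)
    (w : ℕ → EuclideanSpace ℝ (Fin d)) (hwW : ∀ t, w t ∈ W)
    (hupd : ∀ t, ∀ u ∈ W,
      ‖w t + ((1 - γ * L ^ 2) / (4 * L ^ 3)) • tdExpected D P x r γ f (w t) - w (t + 1)‖ ≤
        ‖w t + ((1 - γ * L ^ 2) / (4 * L ^ 3)) • tdExpected D P x r γ f (w t) - u‖)
    (wstar : EuclideanSpace ℝ (Fin d)) (hwstar : wstar ∈ W)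
    (hfix : ∀ u ∈ W,
      ‖wstar + ((1 - γ * L ^ 2) / (4 * L ^ 3)) • tdExpected D P x r γ f wstar - wstar‖ ≤
        ‖wstar + ((1 - γ * L ^ 2) / (4 * L ^ 3)) • tdExpected D P x r γ f wstar - u‖)
    (T : ℕ) (hT : 1 ≤ T) :
    ∑ s, D s * ⟪x s, wstar - (T : ℝ)⁻¹ • ∑ t ∈ Finset.range T, w t⟫ ^ 2 ≤
      (2 * L ^ 2 / (1 - γ * L ^ 2)) ^ 2 * ‖wstar - w 0‖ ^ 2 / T := by
  exact td_expected_update_average_rate_general hD hD1 hP hP1 hstat hx hγ0 hL hf.monotone hfLip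
    hWcvx hγL (fun t => ⟨hwW (t + 1), hupd t⟩) ⟨hwstar, hfix⟩ hT
end
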